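/- Let m > 1, let N ≥ 2 be an integer, and let ψ be a model function, nondecreasing, whose associated function H satisfies (H'(r))² ≤ 2 H(r) for all r ≥ 0. Suppose U: [0,∞) → ℝ is a nondecreasing C¹ function with U(0) = 1, U(r) ≥ 1 for all r, U(r) ≤ (1+H(r))^{m/(m-1)} for all r, satisfying U'(r) ψ(r)^{N-1} = ∫₀^r ψ(s)^{N-1} U(s)^{1/m} ds for all r > 0. Then, setting κ_m := (m-1)²/(m(m+1)), one has U(r) ≥ κ_m^{m/(m-1)} H(r)^{m/(m-1)} for every r ≥ 0. -/

import Mathlib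

open Real MeasureTheory Set Filter

/-- The function `H` associated with a model function `ψ` on an `N`-dimensional model
manifold: `H r = ∫₀^r (∫₀^s ψ(t)^{N-1} dt) / ψ(s)^{N-1} ds`. -/
noncomputable def Hfun (N : ℕ) (ψ : ℝ → ℝ) (r : ℝ) : ℝ :=
  ∫ s in (0:ℝ)..r, (∫ t in (0:ℝ)..s, ψ t ^ (N - 1)) / ψ s ^ (N - 1)

/-!
For a weight `w` (here `w = ψ ^ (N - 1)`) write `Q` for its primitive and `H` for the primitive of
`h = Q / w`, so that `(w H')' = w`. Since `h ^ 2 ≤ A * H`, differentiating `H ^ α * Q` gives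
`H ^ α * Q ≤ (1 + A * α) * ∫ w * H ^ α`. With `p = m / (m - 1)` and `α = p - 1 = p / m` this says
that `V = (κ * H) ^ p` is a subsolution of `(w U')' = w * U ^ (1 / m)` as soon as
`κ * (p * (1 + A * (p - 1))) ≤ 1`; the best `κ` for `A = 2` is `κ_m`, which is also the limit of
the iteration `U ≥ C_n * H ^ p_n`. As `V 0 = 0 < U 0`, there is no first point where `V` catches up
with `U`: before such a point `U ^ (1 / m) ≥ V ^ (1 / m)`, hence `U' ≥ V'`.
-/

section Calculus

variable {f : ℝ → ℝ} {a b : ℝ}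

lemma continuousOn_Ici_primitive (hf : ∀ r > a, IntervalIntegrable f volume a r) :
    ContinuousOn (fun r => ∫ s in a..r, f s) (Ici a) := by
  intro r hr
  have har : a < r + 1 := by linarith [mem_Ici.1 hr]
  have hcont := intervalIntegral.continuousOn_primitive_interval' (hf _ har) left_mem_uIcc
  rw [uIcc_of_le har.le] at hcont
  refine (hcont r ⟨hr, by linarith⟩).mono_of_mem_nhdsWithin ?_
  exact mem_nhdsWithin.2 ⟨Iio (r + 1), isOpen_Iio, by simp, fun x hx => ⟨hx.2, hx.1.le⟩⟩

lemma hasDerivAt_primitive_of_continuousOn_Ioi (hf : IntervalIntegrable f volume a b)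
    (hcont : ContinuousOn f (Ioi a)) (hab : a < b) :
    HasDerivAt (fun r => ∫ s in a..r, f s) (f b) b :=
  intervalIntegral.integral_hasDerivAt_right hf
    (hcont.stronglyMeasurableAtFilter isOpen_Ioi b hab) (hcont.continuousAt (Ioi_mem_nhds hab))

lemma intervalIntegrable_of_continuousOn_Ioi_of_abs_le {C : ℝ} (hcont : ContinuousOn f (Ioi a))
    (hab : a ≤ b) (hbound : ∀ s ∈ Ioc a b, |f s| ≤ C) : IntervalIntegrable f volume a b := by
  rw [intervalIntegrable_iff_integrableOn_Ioc_of_le hab]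
  exact IntegrableOn.of_bound measure_Ioc_lt_top
    ((hcont.mono Ioc_subset_Ioi_self).aestronglyMeasurable measurableSet_Ioc) C
    (ae_restrict_of_forall_mem measurableSet_Ioc hbound)

lemma pos_of_deriv_nonneg_while_pos (hcont : ContinuousOn f (Ici a))
    (hdiff : DifferentiableOn ℝ f (Ioi a)) (ha : 0 < f a)
    (hderiv : ∀ r > a, (∀ s ∈ Icc a r, 0 < f s) → 0 ≤ deriv f r) {r : ℝ} (hr : a ≤ r) :
    0 < f r := by
  by_contra! hneg
  have hcontI : ContinuousOn f (Icc a r) := hcont.mono Icc_subset_Ici_self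
  have hcompact : IsCompact (Icc a r ∩ f ⁻¹' Iic 0) :=
    isCompact_Icc.of_isClosed_subset
      (hcontI.preimage_isClosed_of_isClosed isClosed_Icc isClosed_Iic) inter_subset_left
  obtain ⟨R, ⟨hR, hfR⟩, hleast⟩ := hcompact.exists_isLeast ⟨r, ⟨hr, le_rfl⟩, hneg⟩
  have hpos_before : ∀ s, a ≤ s → s < R → 0 < f s := by
    intro s hs hsR
    by_contra! hfs
    exact hsR.not_ge (hleast ⟨⟨hs, hsR.le.trans hR.2⟩, hfs⟩)
  have hmono : MonotoneOn f (Icc a R) := by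
    refine monotoneOn_of_deriv_nonneg (convex_Icc a R) (hcont.mono Icc_subset_Ici_self) ?_ ?_ <;>
      rw [interior_Icc]
    · exact hdiff.mono Ioo_subset_Ioi_self
    · exact fun x hx => hderiv x hx.1 fun s hs => hpos_before s hs.1 (hs.2.trans_lt hx.2)
  have hle : f a ≤ f R := hmono ⟨le_rfl, hR.1⟩ ⟨hR.1, le_rfl⟩ hR.1
  exact (ha.trans_le hle).not_ge hfR

lemma le_of_deriv_le_of_left_le {g : ℝ → ℝ} {r : ℝ} (hf : ContinuousOn f (Ici a))
    (hf' : DifferentiableOn ℝ f (Ioi a)) (hg : ContinuousOn g (Ici a))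
    (hg' : DifferentiableOn ℝ g (Ioi a)) (ha : f a ≤ g a)
    (hderiv : ∀ x > a, deriv f x ≤ deriv g x) (hr : a ≤ r) : f r ≤ g r := by
  have hmono : MonotoneOn (g - f) (Ici a) := by
    refine monotoneOn_of_deriv_nonneg (convex_Ici a) (hg.sub hf) ?_ ?_ <;> rw [interior_Ici]
    · exact hg'.sub hf'
    · intro x hx
      have hx' : Ioi a ∈ nhds x := Ioi_mem_nhds hx
      rw [deriv_sub (hg'.differentiableAt hx') (hf'.differentiableAt hx')]
      exact sub_nonneg.2 (hderiv x hx)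
  exact sub_nonneg.1 ((sub_nonneg.2 ha).trans (hmono self_mem_Ici hr hr))

end Calculus

theorem lt_of_radial_subsolution_of_supersolution {w f U V : ℝ → ℝ}
    (hw_pos : ∀ r > 0, 0 < w r) (hw_int : ∀ r > 0, IntervalIntegrable w volume 0 r)
    (hf_cont : ContinuousOn f (Ici 0)) (hf_mono : MonotoneOn f (Ici 0))
    (hU_cont : ContinuousOn U (Ici 0)) (hU_diff : DifferentiableOn ℝ U (Ioi 0))
    (hV_cont : ContinuousOn V (Ici 0)) (hV_diff : DifferentiableOn ℝ V (Ioi 0))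
    (hV_nonneg : ∀ r ≥ 0, 0 ≤ V r)
    (hV : ∀ r > 0, deriv V r * w r ≤ ∫ s in 0..r, w s * f (V s))
    (hU : ∀ r > 0, ∫ s in 0..r, w s * f (U s) ≤ deriv U r * w r)
    (h0 : V 0 < U 0) {r : ℝ} (hr : 0 ≤ r) : V r < U r := by
  refine sub_pos.1 <| pos_of_deriv_nonneg_while_pos (hU_cont.sub hV_cont) (hU_diff.sub hV_diff)
    (sub_pos.2 h0) (fun x hx hlt => ?_) hr
  have hVU : ∀ s ∈ Icc 0 x, V s < U s := fun s hs => sub_pos.1 (hlt s hs)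
  have hw_comp_int : ∀ Y : ℝ → ℝ, ContinuousOn Y (Ici 0) → (∀ s ∈ Icc 0 x, 0 ≤ Y s) →
      IntervalIntegrable (fun s => w s * f (Y s)) volume 0 x := by
    intro Y hY hY_nonneg
    refine (hw_int x hx).mul_continuousOn ?_
    rw [uIcc_of_le hx.le]
    exact hf_cont.comp (hY.mono Icc_subset_Ici_self) hY_nonneg
  have hV_nonneg' : ∀ s ∈ Icc 0 x, 0 ≤ V s := fun s hs => hV_nonneg s hs.1
  have hU_nonneg : ∀ s ∈ Icc 0 x, 0 ≤ U s := fun s hs => (hV_nonneg' s hs).trans (hVU s hs).le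
  have hint : ∫ s in 0..x, w s * f (V s) ≤ ∫ s in 0..x, w s * f (U s) := by
    refine intervalIntegral.integral_mono_on_of_le_Ioo hx.le (hw_comp_int V hV_cont hV_nonneg')
      (hw_comp_int U hU_cont hU_nonneg) fun s hs => ?_
    have hs' := Ioo_subset_Icc_self hs
    exact mul_le_mul_of_nonneg_left
      (hf_mono (hV_nonneg' s hs') (hU_nonneg s hs') (hVU s hs').le) (hw_pos s hs.1).le
  have hderiv : deriv V x ≤ deriv U x :=
    le_of_mul_le_mul_right ((hV x hx).trans (hint.trans (hU x hx))) (hw_pos x hx)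
  have hx' : Ioi (0 : ℝ) ∈ nhds x := Ioi_mem_nhds hx
  rw [deriv_sub (hU_diff.differentiableAt hx') (hV_diff.differentiableAt hx')]
  exact sub_nonneg.2 hderiv

/-- The volume of the ball of radius `r` for the radial weight `w`. -/
noncomputable def radialVolume (w : ℝ → ℝ) (r : ℝ) : ℝ :=
  ∫ t in 0..r, w t

/-- The quotient of the volume of the ball of radius `r` by the area of its boundary, for the
radial weight `w`. -/
noncomputable def volumeAreaRatio (w : ℝ → ℝ) (r : ℝ) : ℝ :=
  radialVolume w r / w r

/-- The radial solution `H` of `(w H')' = w` with `H 0 = 0`; for `w = ψ ^ (N - 1)` it is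
`Hfun N ψ`. -/
noncomputable def radialTorsion (w : ℝ → ℝ) (r : ℝ) : ℝ :=
  ∫ s in 0..r, volumeAreaRatio w s

/-- A weight on `(0, ∞)` for which `radialVolume` and `radialTorsion` are genuine integrals. The
value at `0` is irrelevant, so singular and degenerate weights are allowed. -/
structure IsRadialWeight (w : ℝ → ℝ) : Prop where
  continuousOn : ContinuousOn w (Ioi 0)
  pos : ∀ r > 0, 0 < w r
  intervalIntegrable : ∀ r > 0, IntervalIntegrable w volume 0 r
  intervalIntegrable_volumeAreaRatio :
    ∀ r > 0, IntervalIntegrable (volumeAreaRatio w) volume 0 r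

lemma radialVolume_zero (w : ℝ → ℝ) : radialVolume w 0 = 0 :=
  intervalIntegral.integral_same

lemma radialTorsion_zero (w : ℝ → ℝ) : radialTorsion w 0 = 0 :=
  intervalIntegral.integral_same

lemma continuousOn_volumeAreaRatio {w : ℝ → ℝ} (hcont : ContinuousOn w (Ioi 0))
    (hpos : ∀ r > 0, 0 < w r) (hint : ∀ r > 0, IntervalIntegrable w volume 0 r) :
    ContinuousOn (volumeAreaRatio w) (Ioi 0) :=
  ((continuousOn_Ici_primitive hint).mono Ioi_subset_Ici_self).div hcont fun r hr => (hpos r hr).ne'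

lemma abs_volumeAreaRatio_le {w : ℝ → ℝ} {r : ℝ} (hpos : ∀ s > 0, 0 < w s)
    (hmono : MonotoneOn w (Ioi 0)) (hint : IntervalIntegrable w volume 0 r) (hr : 0 < r) :
    |volumeAreaRatio w r| ≤ r := by
  have hvol : radialVolume w r ≤ r * w r := by
    have hle : radialVolume w r ≤ ∫ _ in 0..r, w r :=
      intervalIntegral.integral_mono_on_of_le_Ioo hr.le hint intervalIntegrable_const
        fun s hs => hmono hs.1 hr hs.2.le
    simpa using hle
  have hvol_nonneg : 0 ≤ radialVolume w r :=
    (intervalIntegral.intervalIntegral_pos_of_pos_on hint (fun s hs => hpos s hs.1) hr).le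
  rw [volumeAreaRatio, abs_of_nonneg (div_nonneg hvol_nonneg (hpos r hr).le)]
  exact (div_le_iff₀ (hpos r hr)).2 hvol

namespace IsRadialWeight

variable {w : ℝ → ℝ}

lemma of_monotoneOn (hcont : ContinuousOn w (Ioi 0)) (hpos : ∀ r > 0, 0 < w r)
    (hmono : MonotoneOn w (Ioi 0)) : IsRadialWeight w := by
  have hint : ∀ r > 0, IntervalIntegrable w volume 0 r := fun r hr =>
    intervalIntegrable_of_continuousOn_Ioi_of_abs_le hcont hr.le fun s hs => by
      rw [abs_of_pos (hpos s hs.1)]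
      exact hmono hs.1 hr hs.2
  exact ⟨hcont, hpos, hint, fun r hr =>
    intervalIntegrable_of_continuousOn_Ioi_of_abs_le (continuousOn_volumeAreaRatio hcont hpos hint)
      hr.le fun s hs => (abs_volumeAreaRatio_le hpos hmono (hint s hs.1) hs.1).trans hs.2⟩

lemma pow_of_monotoneOn (hcont : ContinuousOn w (Ioi 0)) (hpos : ∀ r > 0, 0 < w r)
    (hmono : MonotoneOn w (Ioi 0)) (n : ℕ) : IsRadialWeight fun r => w r ^ n :=
  of_monotoneOn (hcont.pow n) (fun r hr => pow_pos (hpos r hr) n)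
    fun r hr s hs hrs => pow_le_pow_left₀ (hpos r hr).le (hmono hr hs hrs) n

variable (hw : IsRadialWeight w) {r : ℝ}
include hw

lemma continuousOn_radialVolume : ContinuousOn (radialVolume w) (Ici 0) :=
  continuousOn_Ici_primitive hw.intervalIntegrable

lemma hasDerivAt_radialVolume (hr : 0 < r) : HasDerivAt (radialVolume w) (w r) r :=
  hasDerivAt_primitive_of_continuousOn_Ioi (hw.intervalIntegrable r hr) hw.continuousOn hr

lemma volumeAreaRatio_pos (hr : 0 < r) : 0 < volumeAreaRatio w r :=
  div_pos (intervalIntegral.intervalIntegral_pos_of_pos_on (hw.intervalIntegrable r hr)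
    (fun s hs => hw.pos s hs.1) hr) (hw.pos r hr)

lemma volumeAreaRatio_mul (hr : 0 < r) : volumeAreaRatio w r * w r = radialVolume w r :=
  div_mul_cancel₀ _ (hw.pos r hr).ne'

lemma continuousOn_radialTorsion : ContinuousOn (radialTorsion w) (Ici 0) :=
  continuousOn_Ici_primitive hw.intervalIntegrable_volumeAreaRatio

lemma hasDerivAt_radialTorsion (hr : 0 < r) :
    HasDerivAt (radialTorsion w) (volumeAreaRatio w r) r :=
  hasDerivAt_primitive_of_continuousOn_Ioi (hw.intervalIntegrable_volumeAreaRatio r hr)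
    (continuousOn_volumeAreaRatio hw.continuousOn hw.pos hw.intervalIntegrable) hr

lemma radialTorsion_pos (hr : 0 < r) : 0 < radialTorsion w r :=
  intervalIntegral.intervalIntegral_pos_of_pos_on (hw.intervalIntegrable_volumeAreaRatio r hr)
    (fun _ hs => hw.volumeAreaRatio_pos hs.1) hr

lemma radialTorsion_nonneg (hr : 0 ≤ r) : 0 ≤ radialTorsion w r :=
  hr.eq_or_lt.elim (fun h => h ▸ (radialTorsion_zero w).ge) fun h => (hw.radialTorsion_pos h).le

variable {A : ℝ}

lemma pos_of_sq_volumeAreaRatio_le (hr : 0 < r)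
    (hA : volumeAreaRatio w r ^ 2 ≤ A * radialTorsion w r) : 0 < A :=
  pos_of_mul_pos_left ((pow_pos (hw.volumeAreaRatio_pos hr) 2).trans_le hA)
    (hw.radialTorsion_nonneg hr.le)

lemma hasDerivAt_radialTorsion_rpow_mul_radialVolume (α : ℝ) (hr : 0 < r) :
    HasDerivAt (fun x => radialTorsion w x ^ α * radialVolume w x)
      (volumeAreaRatio w r * α * radialTorsion w r ^ (α - 1) * radialVolume w r
        + radialTorsion w r ^ α * w r) r :=
  ((hw.hasDerivAt_radialTorsion hr).rpow_const (Or.inl (hw.radialTorsion_pos hr).ne')).mul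
    (hw.hasDerivAt_radialVolume hr)

lemma deriv_radialTorsion_rpow_mul_radialVolume_le {α : ℝ} (hα : 0 ≤ α) (hr : 0 < r)
    (hA : volumeAreaRatio w r ^ 2 ≤ A * radialTorsion w r) :
    deriv (fun x => radialTorsion w x ^ α * radialVolume w x) r
      ≤ (1 + A * α) * (w r * radialTorsion w r ^ α) := by
  have hH := hw.radialTorsion_pos hr
  have hsplit : radialTorsion w r ^ α = radialTorsion w r ^ (α - 1) * radialTorsion w r := by
    rw [← rpow_add_one hH.ne', sub_add_cancel]
  have hcoef : 0 ≤ α * (w r * radialTorsion w r ^ (α - 1)) := by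
    have := hw.pos r hr
    positivity
  rw [(hw.hasDerivAt_radialTorsion_rpow_mul_radialVolume α hr).deriv,
    ← hw.volumeAreaRatio_mul hr, hsplit]
  linear_combination mul_le_mul_of_nonneg_left hA hcoef

lemma continuousOn_radialTorsion_rpow {α : ℝ} (hα : 0 ≤ α) :
    ContinuousOn (fun r => radialTorsion w r ^ α) (Ici 0) :=
  hw.continuousOn_radialTorsion.rpow_const fun _ _ => Or.inr hα

lemma radialTorsion_rpow_mul_radialVolume_le {α : ℝ} (hα : 0 ≤ α)
    (hA : ∀ r > 0, volumeAreaRatio w r ^ 2 ≤ A * radialTorsion w r) (hr : 0 ≤ r) :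
    radialTorsion w r ^ α * radialVolume w r
      ≤ (1 + A * α) * ∫ s in 0..r, w s * radialTorsion w s ^ α := by
  have hHα := hw.continuousOn_radialTorsion_rpow hα
  have hint : ∀ x > 0, IntervalIntegrable (fun s => w s * radialTorsion w s ^ α) volume 0 x :=
    fun x hx => (hw.intervalIntegrable x hx).mul_continuousOn <|
      hHα.mono (by rw [uIcc_of_le hx.le]; exact Icc_subset_Ici_self)
  have hderiv : ∀ x > 0, HasDerivAt (fun x => ∫ s in 0..x, w s * radialTorsion w s ^ α)
      (w x * radialTorsion w x ^ α) x := fun x hx =>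
    hasDerivAt_primitive_of_continuousOn_Ioi (hint x hx)
      (hw.continuousOn.mul (hHα.mono Ioi_subset_Ici_self)) hx
  refine le_of_deriv_le_of_left_le (f := fun x => radialTorsion w x ^ α * radialVolume w x)
    (g := fun x => (1 + A * α) * ∫ s in 0..x, w s * radialTorsion w s ^ α)
    (hHα.mul hw.continuousOn_radialVolume)
    (fun x hx => (hw.hasDerivAt_radialTorsion_rpow_mul_radialVolume α
      hx).differentiableAt.differentiableWithinAt)
    (continuousOn_const.mul (continuousOn_Ici_primitive hint))
    (fun x hx => ((hderiv x hx).const_mul _).differentiableAt.differentiableWithinAt)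
    (by simp [radialVolume_zero]) (fun x hx => ?_) hr
  rw [((hderiv x hx).const_mul _).deriv]
  exact hw.deriv_radialTorsion_rpow_mul_radialVolume_le hα hx (hA x hx)

lemma hasDerivAt_const_mul_radialTorsion_rpow {κ : ℝ} (p : ℝ) (hκ : κ ≠ 0) (hr : 0 < r) :
    HasDerivAt (fun x => (κ * radialTorsion w x) ^ p)
      (κ * volumeAreaRatio w r * p * (κ * radialTorsion w r) ^ (p - 1)) r :=
  ((hw.hasDerivAt_radialTorsion hr).const_mul κ).rpow_const
    (Or.inl (mul_ne_zero hκ (hw.radialTorsion_pos hr).ne'))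

lemma integral_mul_const_mul_radialTorsion_rpow_rpow {m p κ : ℝ} (hmp : m.HolderConjugate p)
    (hκ : 0 ≤ κ) (hr : 0 ≤ r) :
    ∫ s in 0..r, w s * ((κ * radialTorsion w s) ^ p) ^ (1 / m)
      = κ ^ (p - 1) * ∫ s in 0..r, w s * radialTorsion w s ^ (p - 1) := by
  rw [← intervalIntegral.integral_const_mul]
  refine intervalIntegral.integral_congr fun s hs => ?_
  rw [uIcc_of_le hr] at hs
  have hH : 0 ≤ radialTorsion w s := hw.radialTorsion_nonneg hs.1
  have hpow : ((κ * radialTorsion w s) ^ p) ^ (1 / m)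
      = κ ^ (p - 1) * radialTorsion w s ^ (p - 1) := by
    rw [← rpow_mul (mul_nonneg hκ hH), mul_one_div, hmp.symm.div_conj_eq_sub_one, mul_rpow hκ hH]
  simp only [hpow]
  ring

theorem const_mul_radialTorsion_rpow_subsolution {m p κ : ℝ} (hmp : m.HolderConjugate p)
    (hκ : 0 < κ) (hκA : κ * (p * (1 + A * (p - 1))) ≤ 1)
    (hA : ∀ r > 0, volumeAreaRatio w r ^ 2 ≤ A * radialTorsion w r) (hr : 0 < r) :
    deriv (fun x => (κ * radialTorsion w x) ^ p) r * w r
      ≤ ∫ s in 0..r, w s * ((κ * radialTorsion w s) ^ p) ^ (1 / m) := by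
  have hp : 0 ≤ p := hmp.symm.nonneg
  have hp1 : 0 ≤ p - 1 := hmp.symm.sub_one_pos.le
  have hint_nonneg : 0 ≤ ∫ s in 0..r, w s * radialTorsion w s ^ (p - 1) := by
    rw [intervalIntegral.integral_of_le hr.le]
    exact setIntegral_nonneg measurableSet_Ioc fun s hs =>
      mul_nonneg (hw.pos s hs.1).le (rpow_nonneg (hw.radialTorsion_nonneg hs.1.le) _)
  rw [hw.integral_mul_const_mul_radialTorsion_rpow_rpow hmp hκ.le hr.le,
    (hw.hasDerivAt_const_mul_radialTorsion_rpow p hκ.ne' hr).deriv,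
    mul_rpow hκ.le (hw.radialTorsion_nonneg hr.le)]
  calc κ * volumeAreaRatio w r * p * (κ ^ (p - 1) * radialTorsion w r ^ (p - 1)) * w r
      = κ ^ (p - 1) * (κ * p * (radialTorsion w r ^ (p - 1) * radialVolume w r)) := by
        rw [← hw.volumeAreaRatio_mul hr]; ring
    _ ≤ κ ^ (p - 1) * (κ * p * ((1 + A * (p - 1))
          * ∫ s in 0..r, w s * radialTorsion w s ^ (p - 1))) := by
        refine mul_le_mul_of_nonneg_left (mul_le_mul_of_nonneg_left ?_ ?_) ?_
        · exact hw.radialTorsion_rpow_mul_radialVolume_le hp1 hA hr.le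
        · positivity
        · positivity
    _ = κ ^ (p - 1) * (κ * (p * (1 + A * (p - 1)))
          * ∫ s in 0..r, w s * radialTorsion w s ^ (p - 1)) := by ring
    _ ≤ κ ^ (p - 1) * ∫ s in 0..r, w s * radialTorsion w s ^ (p - 1) := by
        gcongr
        exact mul_le_of_le_one_left hint_nonneg hκA

theorem const_mul_radialTorsion_rpow_lt {m p κ : ℝ} (hmp : m.HolderConjugate p)
    (hκ : 0 < κ) (hκA : κ * (p * (1 + A * (p - 1))) ≤ 1)
    (hA : ∀ r > 0, volumeAreaRatio w r ^ 2 ≤ A * radialTorsion w r) {U : ℝ → ℝ}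
    (hU_cont : ContinuousOn U (Ici 0)) (hU_diff : DifferentiableOn ℝ U (Ioi 0)) (hU0 : 0 < U 0)
    (hU : ∀ r > 0, ∫ s in 0..r, w s * U s ^ (1 / m) ≤ deriv U r * w r) (hr : 0 ≤ r) :
    (κ * radialTorsion w r) ^ p < U r := by
  have hm : 0 ≤ 1 / m := hmp.one_div_nonneg
  have hV0 : (κ * radialTorsion w 0) ^ p = 0 := by
    rw [radialTorsion_zero, mul_zero, zero_rpow hmp.symm.ne_zero]
  exact lt_of_radial_subsolution_of_supersolution (V := fun x => (κ * radialTorsion w x) ^ p)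
    hw.pos hw.intervalIntegrable (continuous_rpow_const hm).continuousOn
    (monotoneOn_rpow_Ici_of_exponent_nonneg hm) hU_cont hU_diff
    ((continuousOn_const.mul hw.continuousOn_radialTorsion).rpow_const
      fun _ _ => Or.inr hmp.symm.nonneg)
    (fun x hx => (hw.hasDerivAt_const_mul_radialTorsion_rpow p hκ.ne'
      hx).differentiableAt.differentiableWithinAt)
    (fun x hx => rpow_nonneg (mul_nonneg hκ.le (hw.radialTorsion_nonneg hx)) p)
    (fun x hx => hw.const_mul_radialTorsion_rpow_subsolution hmp hκ hκA hA hx) hU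
    (hV0.trans_lt hU0) hr

end IsRadialWeight

theorem statement4_general {m A : ℝ} (hm : 1 < m) {w : ℝ → ℝ} (hw : IsRadialWeight w)
    (hA : ∀ r > 0, deriv (radialTorsion w) r ^ 2 ≤ A * radialTorsion w r) {U : ℝ → ℝ}
    (hU_cont : ContinuousOn U (Ici 0)) (hU_diff : DifferentiableOn ℝ U (Ioi 0)) (hU0 : 0 < U 0)
    (hU : ∀ r > 0, ∫ s in 0..r, w s * U s ^ (1 / m) ≤ deriv U r * w r) {r : ℝ} (hr : 0 ≤ r) :
    ((m - 1) ^ 2 / (m * (m - 1 + A))) ^ (m / (m - 1)) * radialTorsion w r ^ (m / (m - 1))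
      < U r := by
  have hA' : ∀ r > 0, volumeAreaRatio w r ^ 2 ≤ A * radialTorsion w r := fun s hs => by
    simpa only [(hw.hasDerivAt_radialTorsion hs).deriv] using hA s hs
  have hA_pos : 0 < A := hw.pos_of_sq_volumeAreaRatio_le one_pos (hA' 1 one_pos)
  have hm1 : 0 < m - 1 := sub_pos.2 hm
  have hκ : 0 < (m - 1) ^ 2 / (m * (m - 1 + A)) := by positivity
  have hκA : (m - 1) ^ 2 / (m * (m - 1 + A))
      * (m / (m - 1) * (1 + A * (m / (m - 1) - 1))) = 1 := by
    field_simp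
    ring
  rw [← mul_rpow hκ.le (hw.radialTorsion_nonneg hr)]
  exact hw.const_mul_radialTorsion_rpow_lt (HolderConjugate.conjExponent hm) hκ hκA.le hA'
    hU_cont hU_diff hU0 hU hr

/-- Lower bound for solutions of the radial ODE `(ψ^{N-1} U')' = ψ^{N-1} U^{1/m}`:
under `(H')² ≤ 2H`, if `U` is nondecreasing `C¹`, `U(0)=1`, `U ≥ 1`,
`U ≤ (1+H)^{m/(m-1)}`, and `U'(r) ψ(r)^{N-1} = ∫₀^r ψ(s)^{N-1} U(s)^{1/m} ds`, then
with `κ_m := (m-1)²/(m(m+1))` one has `U(r) ≥ κ_m^{m/(m-1)} H(r)^{m/(m-1)}`. -/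
theorem statement4 (m : ℝ) (hm : 1 < m) (N : ℕ) (hN : 2 ≤ N) (ψ : ℝ → ℝ)
    (hsmooth : ContDiffOn ℝ (⊤ : ℕ∞) ψ (Ici 0))
    (hψ0 : ψ 0 = 0) (hψ'0 : deriv ψ 0 = 1)
    (hψpos : ∀ r > (0:ℝ), 0 < ψ r)
    (hmono : MonotoneOn ψ (Ici 0))
    (hH2 : ∀ r ≥ (0:ℝ), (deriv (Hfun N ψ) r) ^ 2 ≤ 2 * Hfun N ψ r)
    (U : ℝ → ℝ) (hUC1 : ContDiffOn ℝ 1 U (Ici 0))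
    (hUmono : MonotoneOn U (Ici 0))
    (hU0 : U 0 = 1) (hU1 : ∀ r ≥ (0:ℝ), 1 ≤ U r)
    (hUup : ∀ r ≥ (0:ℝ), U r ≤ (1 + Hfun N ψ r) ^ (m/(m-1)))
    (hUeq : ∀ r > (0:ℝ), deriv U r * ψ r ^ (N - 1)
        = ∫ s in (0:ℝ)..r, ψ s ^ (N - 1) * U s ^ (1/m)) :
    ∀ r ≥ (0:ℝ), ((m-1)^2/(m*(m+1))) ^ (m/(m-1)) * Hfun N ψ r ^ (m/(m-1)) ≤ U r := by
  intro r hr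
  have hw : IsRadialWeight fun s => ψ s ^ (N - 1) :=
    .pow_of_monotoneOn (hsmooth.continuousOn.mono Ioi_subset_Ici_self) hψpos
      (hmono.mono Ioi_subset_Ici_self) (N - 1)
  have hU_diff : DifferentiableOn ℝ U (Ioi 0) :=
    (hUC1.differentiableOn one_ne_zero).mono Ioi_subset_Ici_self
  rw [show m + 1 = m - 1 + 2 by ring]
  exact (statement4_general hm hw (fun s hs => hH2 s hs.le) hUC1.continuousOn hU_diff
    (hU0 ▸ one_pos) (fun s hs => (hUeq s hs).ge) hr).le
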